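/- Let b > 0 and let q : ℝ → ℂ be continuous on [−b, b]. Then there exists a continuous function K on the closed triangle {(x,t) ∈ ℝ² : |t| ≤ |x| ≤ b} such that for every twice continuously differentiable function u : [−b,b] → ℂ, the function (Tu)(x) := u(x) + ∫_{−x}^{x} K(x,t) u(t) dt is twice continuously differentiable on [−b,b] and satisfies (Tu)''(x) − q(x)·(Tu)(x) = (T(u''))(x) for all x ∈ [−b,b]. -/

import Mathlib

open MeasureTheory Set Filter Finset Complex Topology

noncomputable section

/-!
In the characteristic coordinates `ξ = (x + t) / 2`, `η = (x - t) / 2` the equation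
`K_xx - K_tt = q(x) K` for the kernel, with `K(x, x) = ½ ∫₀ˣ q` and `K(x, -x) = 0`, becomes the
Goursat problem `∂_ξ ∂_η H = q(ξ + η) H` with data on the coordinate axes. As an integral equation
it is solved by contraction in the supremum norm weighted by `cosh (l ξ) cosh (l η)`, `l` large.
When `q` is merely continuous, `K` need not be twice differentiable. So `∫ K(x, t) u(t) dt` is
written first with `ξ` and then with `η` as the variable of integration: the first differentiation
in `x` meets `H` only through `∂_η H`, the second meets `∂_η H` only through `q(ξ + η) H`.
-/

section Integrals

variable {E : Type*} [NormedAddCommGroup E] [NormedSpace ℝ E]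

lemma hasDerivAt_integral_of_continuous_deriv {g g' : ℝ → ℝ → E} (hg : ∀ x, Continuous (g x))
    (hg' : Continuous ↿g') (hd : ∀ x t, HasDerivAt (fun s => g s t) (g' x t) x) (a b x : ℝ) :
    HasDerivAt (fun s => ∫ t in a..b, g s t) (∫ t in a..b, g' x t) x := by
  obtain ⟨C, hC⟩ := ((isCompact_closedBall x 1).prod isCompact_uIcc).exists_bound_of_continuousOn
    (s := Metric.closedBall x 1 ×ˢ uIcc a b) hg'.continuousOn
  have hg'x : Continuous (g' x) := hg'.comp (Continuous.prodMk_right x)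
  refine (intervalIntegral.hasDerivAt_integral_of_dominated_loc_of_deriv_le
    (Metric.closedBall_mem_nhds x one_pos) (.of_forall fun s => (hg s).aestronglyMeasurable)
    ((hg x).intervalIntegrable a b) hg'x.aestronglyMeasurable (bound := fun _ => C)
    (.of_forall fun t ht s hs => ?_) intervalIntegrable_const
    (.of_forall fun t _ s _ => hd s t)).2
  exact hC (s, t) ⟨hs, uIoc_subset_uIcc ht⟩

lemma hasDerivAt_integral_diagonal [CompleteSpace E] {g g' : ℝ → ℝ → E} (hg : Continuous ↿g)
    (hg' : Continuous ↿g') (hd : ∀ x t, HasDerivAt (fun s => g s t) (g' x t) x) (a x : ℝ) :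
    HasDerivAt (fun s => ∫ t in a..s, g s t) (g x x + ∫ t in a..x, g' x t) x := by
  have hg_slice : ∀ s, Continuous (g s) := fun s => hg.comp (Continuous.prodMk_right s)
  have hintg : Continuous fun p : ℝ × ℝ => ∫ t in a..p.2, g' p.1 t :=
    intervalIntegral.continuous_parametric_intervalIntegral_of_continuous
      (f := fun (p : ℝ × ℝ) t => g' p.1 t)
      (hg'.comp (by fun_prop : Continuous fun z : (ℝ × ℝ) × ℝ => (z.1.1, z.2))) continuous_snd
  have hpartial := hasStrictFDerivAt_uncurry_coprod (𝕜 := ℝ) (u := (x, x))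
    (f := fun s y => ∫ t in a..y, g s t)
    (f₁ := fun s y => .toSpanSingleton ℝ (∫ t in a..y, g' s t))
    (f₂ := fun s y => .toSpanSingleton ℝ (g s y))
    (.of_forall fun v =>
      (hasDerivAt_integral_of_continuous_deriv hg_slice hg' hd a v.2 v.1).hasFDerivAt)
    (.of_forall fun v =>
      ((hg_slice v.1).integral_hasStrictDerivAt a v.2).hasDerivAt.hasFDerivAt)
    ((ContinuousLinearMap.toSpanSingletonCLE (𝕜 := ℝ)).continuous.comp hintg).continuousAt
    ((ContinuousLinearMap.toSpanSingletonCLE (𝕜 := ℝ)).continuous.comp hg).continuousAt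
  have hdiag : HasDerivAt (fun s : ℝ => (s, s)) (1, 1) x :=
    (hasDerivAt_id x).prodMk (hasDerivAt_id x)
  refine (hpartial.hasFDerivAt.comp_hasDerivAt (f := fun s : ℝ => (s, s)) x hdiag).congr_deriv ?_
  simp [Function.HasUncurry.uncurry, add_comm]

lemma norm_integral_le_div_mul_cosh {f : ℝ → E} {B l : ℝ} (hl : 0 < l)
    (hf : ∀ t, ‖f t‖ ≤ B * Real.cosh (l * t)) (x : ℝ) :
    ‖∫ t in (0 : ℝ)..x, f t‖ ≤ B / l * Real.cosh (l * x) := by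
  have hB : 0 ≤ B := by simpa using (norm_nonneg _).trans (hf 0)
  have hsinh : |Real.sinh (l * x)| ≤ Real.cosh (l * x) :=
    abs_le_of_sq_le_sq (by rw [Real.cosh_sq]; linarith) (Real.cosh_pos _).le
  have hderiv : ∀ t ∈ uIcc 0 x,
      HasDerivAt (fun t => B / l * Real.sinh (l * t)) (B * Real.cosh (l * t)) t := fun t _ =>
    (((hasDerivAt_id t).const_mul l).sinh.const_mul (B / l)).congr_deriv (by
      simp only [id]; field_simp)
  have hintg : IntervalIntegrable (fun t => B * Real.cosh (l * t)) volume 0 x :=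
    Continuous.intervalIntegrable (by fun_prop) _ _
  calc ‖∫ t in (0 : ℝ)..x, f t‖ ≤ |∫ t in (0 : ℝ)..x, B * Real.cosh (l * t)| :=
        intervalIntegral.norm_integral_le_abs_of_norm_le (.of_forall hf) hintg
    _ = B / l * |Real.sinh (l * x)| := by
        rw [intervalIntegral.integral_eq_sub_of_hasDerivAt hderiv hintg, mul_zero, Real.sinh_zero,
          mul_zero, sub_zero, abs_mul, abs_of_nonneg (div_nonneg hB hl.le)]
    _ ≤ B / l * Real.cosh (l * x) := by gcongr

end Integrals

section WeightedContraction

variable {X E : Type*} [TopologicalSpace X] [NormedAddCommGroup E] [NormedSpace ℝ E]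

open BoundedContinuousFunction in
lemma exists_eq_add_of_weighted_contraction [CompleteSpace E] (V : C(X, E) →+ C(X, E))
    {w : C(X, ℝ)} (hw : ∀ x, 0 < w x) {c : NNReal} (hc : c < 1)
    (hV : ∀ (f : C(X, E)) (B : ℝ), (∀ x, ‖f x‖ ≤ B * w x) → ∀ x, ‖V f x‖ ≤ c * B * w x)
    {g : C(X, E)} {B : ℝ} (hg : ∀ x, ‖g x‖ ≤ B * w x) :
    ∃ f : C(X, E), f = g + V f := by
  have hVw (h : X →ᵇ E) (x : X) : ‖V (w • h.toContinuousMap) x‖ ≤ c * ‖h‖ * w x :=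
    hV _ ‖h‖ (fun y => by
      simpa [norm_smul, abs_of_pos (hw y), mul_comm] using
        mul_le_mul_of_nonneg_right (h.norm_coe_le_norm y) (hw y).le) x
  have hnorm (x : X) (e : E) : ‖(w x)⁻¹ • e‖ = ‖e‖ / w x := by
    rw [norm_smul, norm_inv, Real.norm_of_nonneg (hw x).le, inv_mul_eq_div]
  let Φ : (X →ᵇ E) → (X →ᵇ E) := fun h =>
    .ofNormedAddCommGroup (fun x => (w x)⁻¹ • (g + V (w • h.toContinuousMap)) x)
      ((w.continuous.inv₀ fun x => (hw x).ne').smul (map_continuous _)) (B + c * ‖h‖) fun x => by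
        rw [hnorm, div_le_iff₀ (hw x), add_mul]
        exact (norm_add_le _ _).trans (add_le_add (hg x) (hVw h x))
  have hΦ_sub (h k : X →ᵇ E) (x : X) :
      Φ h x - Φ k x = (w x)⁻¹ • V (w • (h - k).toContinuousMap) x := by
    have hdiff : w • (h - k).toContinuousMap = w • h.toContinuousMap - w • k.toContinuousMap := by
      ext y; simp [smul_sub]
    calc Φ h x - Φ k x
        = (w x)⁻¹ • (g + V (w • h.toContinuousMap)) x
          - (w x)⁻¹ • (g + V (w • k.toContinuousMap)) x := rfl
      _ = (w x)⁻¹ • V (w • (h - k).toContinuousMap) x := by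
        rw [hdiff, map_sub, ← smul_sub, ContinuousMap.add_apply, ContinuousMap.add_apply,
          add_sub_add_left_eq_sub, ContinuousMap.sub_apply]
  have hΦ : ContractingWith c Φ := ⟨hc, .of_dist_le_mul fun h k => by
    refine (dist_le (by positivity)).2 fun x => ?_
    rw [dist_eq_norm, hΦ_sub, hnorm, div_le_iff₀ (hw x), dist_eq_norm]
    exact hVw (h - k) x⟩
  let h := hΦ.fixedPoint
  refine ⟨w • h.toContinuousMap, ContinuousMap.ext fun x => ?_⟩
  calc w x • h x = w x • Φ h x := by rw [hΦ.fixedPoint_isFixedPt.eq]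
    _ = (g + V (w • h.toContinuousMap)) x := smul_inv_smul₀ (hw x).ne' _

end WeightedContraction

section Goursat

variable {A : Type*} [NormedRing A] [NormedAlgebra ℝ A]

/-- The operator sending `H` to `∫₀^ξ ∫₀^η q(α + β) H(α, β) dβ dα`, the function with mixed
derivative `q(ξ + η) H(ξ, η)` that vanishes on both coordinate axes. -/
def goursatOperator (q : C(ℝ, A)) : C(ℝ × ℝ, A) →+ C(ℝ × ℝ, A) :=
  have hinner (H : C(ℝ × ℝ, A)) : Continuous fun z : ℝ × ℝ =>
      ∫ β in (0 : ℝ)..z.2, q (z.1 + β) * H (z.1, β) :=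
    intervalIntegral.continuous_parametric_intervalIntegral_of_continuous
      (f := fun (z : ℝ × ℝ) β => q (z.1 + β) * H (z.1, β))
      (by simp only [Function.uncurry_def]; fun_prop) continuous_snd
  AddMonoidHom.mk'
    (fun H =>
      { toFun := fun p => ∫ α in (0 : ℝ)..p.1, ∫ β in (0 : ℝ)..p.2, q (α + β) * H (α, β)
        continuous_toFun :=
          intervalIntegral.continuous_parametric_intervalIntegral_of_continuous
            (f := fun (p : ℝ × ℝ) α => ∫ β in (0 : ℝ)..p.2, q (α + β) * H (α, β))
            ((hinner H).comp (by fun_prop : Continuous fun z : (ℝ × ℝ) × ℝ => (z.2, z.1.2)))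
            continuous_fst })
    fun H₁ H₂ => by
      ext p
      have hslice (H : C(ℝ × ℝ, A)) (α : ℝ) :
          IntervalIntegrable (fun β => q (α + β) * H (α, β)) volume 0 p.2 :=
        Continuous.intervalIntegrable (by fun_prop) _ _
      have hiter (H : C(ℝ × ℝ, A)) : IntervalIntegrable
          (fun α => ∫ β in (0 : ℝ)..p.2, q (α + β) * H (α, β)) volume 0 p.1 :=
        ((hinner H).comp (Continuous.prodMk_left p.2)).intervalIntegrable _ _
      simp only [ContinuousMap.coe_mk, ContinuousMap.add_apply, mul_add,
        intervalIntegral.integral_add (hslice H₁ _) (hslice H₂ _),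
        intervalIntegral.integral_add (hiter H₁) (hiter H₂)]

lemma goursatOperator_apply (q : C(ℝ, A)) (H : C(ℝ × ℝ, A)) (p : ℝ × ℝ) :
    goursatOperator q H p = ∫ α in (0 : ℝ)..p.1, ∫ β in (0 : ℝ)..p.2, q (α + β) * H (α, β) :=
  rfl

lemma norm_goursatOperator_le {q : C(ℝ, A)} {M : ℝ} (hq : ∀ x, ‖q x‖ ≤ M) {l : ℝ} (hl : 0 < l)
    {H : C(ℝ × ℝ, A)} {B : ℝ}
    (hH : ∀ p, ‖H p‖ ≤ B * (Real.cosh (l * p.1) * Real.cosh (l * p.2))) (p : ℝ × ℝ) :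
    ‖goursatOperator q H p‖ ≤ M / l ^ 2 * B * (Real.cosh (l * p.1) * Real.cosh (l * p.2)) := by
  have hintegrand (α β : ℝ) :
      ‖q (α + β) * H (α, β)‖ ≤ M * B * Real.cosh (l * α) * Real.cosh (l * β) :=
    calc ‖q (α + β) * H (α, β)‖ ≤ M * (B * (Real.cosh (l * α) * Real.cosh (l * β))) :=
          norm_mul_le_of_le (hq _) (hH (α, β))
      _ = M * B * Real.cosh (l * α) * Real.cosh (l * β) := by ring
  have hinner (α : ℝ) : ‖∫ β in (0 : ℝ)..p.2, q (α + β) * H (α, β)‖ ≤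
      M * B / l * Real.cosh (l * p.2) * Real.cosh (l * α) :=
    (norm_integral_le_div_mul_cosh hl (hintegrand α) p.2).trans_eq (by ring)
  exact (norm_integral_le_div_mul_cosh hl hinner p.1).trans_eq (by ring)

lemma exists_goursat_integral_equation [CompleteSpace A] {q : C(ℝ, A)} {M : ℝ}
    (hq : ∀ x, ‖q x‖ ≤ M) :
    ∃ H : C(ℝ × ℝ, A), ∀ p,
      H p = (2 : ℝ)⁻¹ • (∫ s in (0 : ℝ)..p.1, q s) + goursatOperator q H p := by
  have hM : 0 ≤ M := (norm_nonneg _).trans (hq 0)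
  obtain ⟨l, hl, hMl⟩ : ∃ l : ℝ, 0 < l ∧ M / l ^ 2 ≤ 2⁻¹ := by
    refine ⟨2 * M + 1, by positivity, ?_⟩
    rw [div_le_iff₀ (by positivity)]
    nlinarith
  let w : C(ℝ × ℝ, ℝ) := ⟨fun p => Real.cosh (l * p.1) * Real.cosh (l * p.2), by fun_prop⟩
  have hw : ∀ p, 0 < w p := fun p => mul_pos (Real.cosh_pos _) (Real.cosh_pos _)
  let g : C(ℝ × ℝ, A) :=
    ⟨fun p => (2 : ℝ)⁻¹ • ∫ s in (0 : ℝ)..p.1, q s, .const_smul (.comp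
      (intervalIntegral.continuous_primitive (fun a b => q.continuous.intervalIntegrable a b) 0)
      continuous_fst) _⟩
  have hg (p : ℝ × ℝ) : ‖g p‖ ≤ 2⁻¹ * (M / l) * w p := by
    have hintg := norm_integral_le_div_mul_cosh hl (fun t => (hq t).trans
      (le_mul_of_one_le_right hM (Real.one_le_cosh (l * t)))) p.1
    calc ‖g p‖ = 2⁻¹ * ‖∫ s in (0 : ℝ)..p.1, q s‖ := by simp [g, norm_smul]
      _ ≤ 2⁻¹ * (M / l * Real.cosh (l * p.1)) := by gcongr
      _ ≤ 2⁻¹ * (M / l * w p) := by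
        gcongr
        exact le_mul_of_one_le_right (Real.cosh_pos _).le (Real.one_le_cosh _)
      _ = 2⁻¹ * (M / l) * w p := by ring
  obtain ⟨H, hH⟩ := exists_eq_add_of_weighted_contraction (goursatOperator q) hw
    (c := 2⁻¹) (by rw [← NNReal.coe_lt_coe]; norm_num) (fun f B hf p => by
      have hB : 0 ≤ B := by simpa [w] using (norm_nonneg _).trans (hf 0)
      refine (norm_goursatOperator_le hq hl hf p).trans ?_
      have := (hw p).le
      push_cast
      exact mul_le_mul_of_nonneg_right (mul_le_mul_of_nonneg_right hMl hB) this) hg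
  exact ⟨H, fun p => DFunLike.congr_fun hH p⟩

/-- `H` solves the Goursat problem `∂_ξ ∂_η H = q(ξ + η) H` in the plane with `∂_η H(0, η) = 0` and
`∂_ξ H(ξ, 0) = q(ξ) / 2`; the argument `Hη` stands for `∂_η H`. For the kernel
`K(x, t) = H((x + t) / 2, (x - t) / 2)` the first two conditions read `K_xx - K_tt = q(x) K` and
`d/dx K(x, -x) = 0`, and the third reads `d/dx K(x, x) = q(x) / 2`. -/
structure IsGoursatSolution (q : ℝ → A) (H Hη : ℝ × ℝ → A) : Prop where
  continuous : Continuous H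
  continuous_deriv_snd : Continuous Hη
  hasDerivAt_snd : ∀ ξ η, HasDerivAt (fun s => H (ξ, s)) (Hη (ξ, η)) η
  hasDerivAt_deriv_snd : ∀ ξ η, HasDerivAt (fun s => Hη (s, η)) (q (ξ + η) * H (ξ, η)) ξ
  hasDerivAt_axis : ∀ ξ, HasDerivAt (fun s => H (s, 0)) ((2 : ℝ)⁻¹ • q ξ) ξ
  deriv_snd_axis : ∀ η, Hη (0, η) = 0

lemma isGoursatSolution_of_integral_equation [CompleteSpace A] {q : C(ℝ, A)} {H : C(ℝ × ℝ, A)}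
    (hH : ∀ p, H p = (2 : ℝ)⁻¹ • (∫ s in (0 : ℝ)..p.1, q s) + goursatOperator q H p) :
    IsGoursatSolution q H (fun p => ∫ α in (0 : ℝ)..p.1, q (α + p.2) * H (α, p.2)) where
  continuous := H.continuous
  continuous_deriv_snd :=
    intervalIntegral.continuous_parametric_intervalIntegral_of_continuous
      (f := fun (p : ℝ × ℝ) α => q (α + p.2) * H (α, p.2))
      (by simp only [Function.uncurry_def]; fun_prop) continuous_fst
  hasDerivAt_snd ξ η := by
    have hdouble : HasDerivAt (fun s => ∫ α in (0 : ℝ)..ξ, ∫ β in (0 : ℝ)..s, q (α + β) * H (α, β))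
        (∫ α in (0 : ℝ)..ξ, q (α + η) * H (α, η)) η :=
      hasDerivAt_integral_of_continuous_deriv
        (g := fun s α => ∫ β in (0 : ℝ)..s, q (α + β) * H (α, β))
        (g' := fun s α => q (α + s) * H (α, s))
        (fun s => intervalIntegral.continuous_parametric_intervalIntegral_of_continuous'
          (by simp only [Function.uncurry_def]; fun_prop) 0 s)
        (by simp only [Function.HasUncurry.uncurry, id]; fun_prop)
        (fun s α => (Continuous.integral_hasStrictDerivAt
          (f := fun β => q (α + β) * H (α, β)) (by fun_prop) 0 s).hasDerivAt) 0 ξ η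
    exact (hdouble.const_add ((2 : ℝ)⁻¹ • ∫ s in (0 : ℝ)..ξ, q s)).congr_of_eventuallyEq
      (.of_forall fun s => hH (ξ, s))
  hasDerivAt_deriv_snd ξ η :=
    (Continuous.integral_hasStrictDerivAt (f := fun α => q (α + η) * H (α, η))
      (by fun_prop) 0 ξ).hasDerivAt
  hasDerivAt_axis ξ := by
    have haxis (s : ℝ) : H (s, 0) = (2 : ℝ)⁻¹ • ∫ t in (0 : ℝ)..s, q t := by
      simp [hH (s, 0), goursatOperator_apply]
    have hprimitive := (q.continuous.integral_hasStrictDerivAt 0 ξ).hasDerivAt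
    exact (hprimitive.const_smul _).congr_of_eventuallyEq (.of_forall haxis)
  deriv_snd_axis η := intervalIntegral.integral_same

lemma exists_isGoursatSolution [CompleteSpace A] {q : ℝ → A} (hq : Continuous q) {M : ℝ}
    (hM : ∀ x, ‖q x‖ ≤ M) : ∃ H Hη, IsGoursatSolution q H Hη :=
  let ⟨H, hH⟩ := exists_goursat_integral_equation (q := ⟨q, hq⟩) hM
  ⟨H, _, isGoursatSolution_of_integral_equation hH⟩

end Goursat

section CharacteristicIntegral

variable {A E : Type*} [NormedRing A] [NormedAddCommGroup E] [NormedSpace ℝ E]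
  [Module A E]

/-- The integral of `K(x, t) v(t)` over `t` from `-x` to `x` for the kernel
`K(x, t) = G((x + t) / 2, (x - t) / 2)` given in the characteristic coordinates
`ξ = (x + t) / 2`, `η = (x - t) / 2`. -/
def charIntegral (G : ℝ × ℝ → A) (v : ℝ → E) (x : ℝ) : E :=
  ∫ t in (-x)..x, G ((x + t) / 2, (x - t) / 2) • v t

variable {G G' : ℝ × ℝ → A} {v v' : ℝ → E}

lemma charIntegral_eq_two_smul (G : ℝ × ℝ → A) (v : ℝ → E) (x : ℝ) :
    charIntegral G v x = (2 : ℝ) • ∫ s in (0 : ℝ)..x, G (s, x - s) • v (2 * s - x) := by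
  have hsubst := intervalIntegral.integral_comp_mul_sub
    (fun t => G ((x + t) / 2, (x - t) / 2) • v t) two_ne_zero x (a := 0) (b := x)
  have hξ (s : ℝ) : (x + (2 * s - x)) / 2 = s := by ring
  have hη (s : ℝ) : (x - (2 * s - x)) / 2 = x - s := by ring
  have hx : 2 * x - x = x := by ring
  simp only [hξ, hη, mul_zero, zero_sub, hx] at hsubst
  rw [hsubst, smul_inv_smul₀ two_ne_zero, charIntegral]

lemma charIntegral_comp_swap_neg (G : ℝ × ℝ → A) (v : ℝ → E) (x : ℝ) :
    charIntegral (G ∘ Prod.swap) (fun t => v (-t)) x = charIntegral G v x := by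
  have hneg := intervalIntegral.integral_comp_neg
    (fun t => G ((x + t) / 2, (x - t) / 2) • v t) (a := -x) (b := x)
  simpa only [charIntegral, Function.comp_apply, Prod.swap_prod_mk, ← sub_eq_add_neg,
    sub_neg_eq_add, neg_neg] using hneg

lemma charIntegral_neg (G : ℝ × ℝ → A) (v : ℝ → E) (x : ℝ) :
    charIntegral G (fun t => -v t) x = -charIntegral G v x := by
  simp only [charIntegral, smul_neg, intervalIntegral.integral_neg]

lemma charIntegral_congr {b x : ℝ} {w : ℝ → E} (hvw : EqOn v w (Icc (-b) b))
    (hx : x ∈ Icc (-b) b) : charIntegral G v x = charIntegral G w x :=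
  intervalIntegral.integral_congr fun t ht => by
    have ht' : t ∈ Icc (-b) b := uIcc_subset_Icc ⟨by linarith [hx.2], by linarith [hx.1]⟩ hx ht
    simp only [hvw ht']

variable [IsBoundedSMul A E]

lemma continuous_charIntegral (hG : Continuous G) (hv : Continuous v) :
    Continuous (charIntegral G v) := by
  simp only [funext (charIntegral_eq_two_smul G v)]
  exact (intervalIntegral.continuous_parametric_intervalIntegral_of_continuous
    (f := fun x s => G (s, x - s) • v (2 * s - x))
    (by simp only [Function.uncurry_def]; fun_prop) continuous_id).const_smul _

variable [NormedAlgebra ℝ A] [IsScalarTower ℝ A E]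

lemma charIntegral_mul_left [CompleteSpace A] [CompleteSpace E] (q : ℝ → A) (hG : Continuous G)
    (hv : Continuous v) (x : ℝ) :
    charIntegral (fun p => q (p.1 + p.2) * G p) v x = q x • charIntegral G v x := by
  have hsum (t : ℝ) : (x + t) / 2 + (x - t) / 2 = x := by ring
  have hintg : IntervalIntegrable (fun t => G ((x + t) / 2, (x - t) / 2) • v t) volume (-x) x :=
    Continuous.intervalIntegrable (by fun_prop) _ _
  simpa only [charIntegral, hsum, mul_smul, ContinuousLinearMap.lsmul_apply] using
    (ContinuousLinearMap.lsmul ℝ A (q x)).intervalIntegral_comp_comm hintg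

lemma hasDerivAt_charIntegral_of_snd [CompleteSpace E] (hG : Continuous G) (hG' : Continuous G')
    (hGd : ∀ ξ η, HasDerivAt (fun s => G (ξ, s)) (G' (ξ, η)) η)
    (hv' : Continuous v') (hv_deriv : ∀ x, HasDerivAt v (v' x) x) (x : ℝ) :
    HasDerivAt (charIntegral G v)
      ((2 : ℝ) • G (x, 0) • v x + charIntegral G' v x - charIntegral G v' x) x := by
  have hv : Continuous v := continuous_iff_continuousAt.2 fun x => (hv_deriv x).continuousAt
  have hline (x s : ℝ) : HasDerivAt (fun x => G (s, x - s) • v (2 * s - x))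
      (G' (s, x - s) • v (2 * s - x) - G (s, x - s) • v' (2 * s - x)) x :=
    (((hGd s (x - s)).comp_sub_const x s).fun_smul
      ((hv_deriv (2 * s - x)).comp_const_sub (2 * s) x)).congr_deriv (by simp only [smul_neg]; abel)
  have hdiag := hasDerivAt_integral_diagonal
    (g := fun x s => G (s, x - s) • v (2 * s - x))
    (g' := fun x s => G' (s, x - s) • v (2 * s - x) - G (s, x - s) • v' (2 * s - x))
    (by simp only [Function.HasUncurry.uncurry, id]; fun_prop)
    (by simp only [Function.HasUncurry.uncurry, id]; fun_prop) hline 0 x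
  simp only [funext (charIntegral_eq_two_smul G v), charIntegral_eq_two_smul G' v,
    charIntegral_eq_two_smul G v']
  refine (hdiag.const_smul (2 : ℝ)).congr_deriv ?_
  rw [intervalIntegral.integral_sub (Continuous.intervalIntegrable (by fun_prop) _ _)
    (Continuous.intervalIntegrable (by fun_prop) _ _), sub_self, show 2 * x - x = x by ring]
  simp only [smul_add, smul_sub, add_sub_assoc]

lemma hasDerivAt_charIntegral_of_fst [CompleteSpace E] (hG : Continuous G) (hG' : Continuous G')
    (hGd : ∀ ξ η, HasDerivAt (fun s => G (s, η)) (G' (ξ, η)) ξ)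
    (hv' : Continuous v') (hv_deriv : ∀ x, HasDerivAt v (v' x) x) (x : ℝ) :
    HasDerivAt (charIntegral G v)
      ((2 : ℝ) • G (0, x) • v (-x) + charIntegral G' v x + charIntegral G v' x) x := by
  have hswap := hasDerivAt_charIntegral_of_snd (G := G ∘ Prod.swap) (G' := G' ∘ Prod.swap)
    (v := fun t => v (-t)) (v' := fun t => -v' (-t)) (by fun_prop) (by fun_prop)
    (fun ξ η => hGd η ξ) (by fun_prop)
    (fun x => (hv_deriv (-x)).scomp x (hasDerivAt_neg x) |>.congr_deriv (by simp)) x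
  simpa only [charIntegral_neg, funext (charIntegral_comp_swap_neg G v),
    charIntegral_comp_swap_neg, sub_neg_eq_add, Function.comp_apply, Prod.swap_prod_mk] using hswap

lemma IsGoursatSolution.hasDerivAt_charIntegral [CompleteSpace E] {q : ℝ → A} {H Hη : ℝ × ℝ → A}
    (hH : IsGoursatSolution q H Hη) (hv' : Continuous v') (hv_deriv : ∀ x, HasDerivAt v (v' x) x)
    (x : ℝ) :
    HasDerivAt (charIntegral H v)
      ((2 : ℝ) • H (x, 0) • v x + charIntegral Hη v x - charIntegral H v' x) x :=
  hasDerivAt_charIntegral_of_snd hH.continuous hH.continuous_deriv_snd hH.hasDerivAt_snd hv'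
    hv_deriv x

lemma IsGoursatSolution.hasDerivAt_deriv_charIntegral [CompleteSpace A] [CompleteSpace E]
    {q : ℝ → A} {H Hη : ℝ × ℝ → A} {v'' : ℝ → E} (hH : IsGoursatSolution q H Hη)
    (hq : Continuous q) (hv'' : Continuous v'') (hv_deriv : ∀ x, HasDerivAt v (v' x) x)
    (hv'_deriv : ∀ x, HasDerivAt v' (v'' x) x) (x : ℝ) :
    HasDerivAt
      (fun x => (2 : ℝ) • H (x, 0) • v x + charIntegral Hη v x - charIntegral H v' x)
      (q x • v x + q x • charIntegral H v x + charIntegral H v'' x) x := by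
  have hv : Continuous v := continuous_iff_continuousAt.2 fun x => (hv_deriv x).continuousAt
  have hv' : Continuous v' := continuous_iff_continuousAt.2 fun x => (hv'_deriv x).continuousAt
  have hHc := hH.continuous
  have hboundary := ((hH.hasDerivAt_axis x).fun_smul (hv_deriv x)).const_smul (2 : ℝ)
  have hHη := hasDerivAt_charIntegral_of_fst hH.continuous_deriv_snd
    (G' := fun p => q (p.1 + p.2) * H p) (by fun_prop) hH.hasDerivAt_deriv_snd hv' hv_deriv x
  rw [hH.deriv_snd_axis, zero_smul, smul_zero, zero_add, charIntegral_mul_left q hHc hv] at hHη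
  refine ((hboundary.add hHη).sub (hH.hasDerivAt_charIntegral hv'' hv'_deriv x)).congr_deriv ?_
  rw [smul_add, smul_assoc, smul_inv_smul₀ two_ne_zero]
  abel

end CharacteristicIntegral

section Extension

variable {E : Type*} [NormedAddCommGroup E]

lemma exists_continuous_bounded_extension {a b : ℝ} (hab : a ≤ b) {f : ℝ → E}
    (hf : ContinuousOn f (Icc a b)) :
    ∃ g, Continuous g ∧ EqOn g f (Icc a b) ∧ ∃ M, ∀ x, ‖g x‖ ≤ M := by
  obtain ⟨M, hM⟩ := isCompact_Icc.exists_bound_of_continuousOn hf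
  exact ⟨IccExtend hab (Icc a b |>.domRestrict f), hf.domRestrict.Icc_extend', fun x hx =>
    IccExtend_of_mem hab _ hx, M, fun x => hM _ (projIcc a b hab x).2⟩

variable [NormedSpace ℝ E]

lemma exists_hasDerivAt_extension [CompleteSpace E] {a b : ℝ} {u u' w : ℝ → E}
    (hu : ∀ x ∈ Icc a b, HasDerivWithinAt u (u' x) (Icc a b) x) (hw : Continuous w)
    (hwu : EqOn w u' (Icc a b)) :
    ∃ v, EqOn v u (Icc a b) ∧ ∀ x, HasDerivAt v (w x) x := by
  refine ⟨fun x => u a + ∫ t in a..x, w t, fun x hx => ?_, fun x =>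
    (hw.integral_hasStrictDerivAt a x).hasDerivAt.const_add (u a)⟩
  have hsub : Icc a x ⊆ Icc a b := Icc_subset_Icc_right hx.2
  have hderiv (t : ℝ) (ht : t ∈ Ioo a x) : HasDerivAt u (w t) t := by
    have htb : t ∈ Ioo a b := Ioo_subset_Ioo_right hx.2 ht
    rw [hwu (Ioo_subset_Icc_self htb)]
    exact (hu t (Ioo_subset_Icc_self htb)).hasDerivAt (Icc_mem_nhds htb.1 htb.2)
  dsimp only
  rw [intervalIntegral.integral_eq_sub_of_hasDerivAt_of_le hx.1
    (fun t ht => (hu t (hsub ht)).continuousWithinAt.mono hsub) hderiv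
    (hw.intervalIntegrable a x), add_sub_cancel]

lemma exists_hasDerivAt_hasDerivAt_extension [CompleteSpace E] {a b : ℝ} (hab : a ≤ b)
    {u u' u'' : ℝ → E} (hu : ∀ x ∈ Icc a b, HasDerivWithinAt u (u' x) (Icc a b) x)
    (hu' : ∀ x ∈ Icc a b, HasDerivWithinAt u' (u'' x) (Icc a b) x)
    (hu'' : ContinuousOn u'' (Icc a b)) :
    ∃ v v' v'' : ℝ → E, EqOn v u (Icc a b) ∧ EqOn v' u' (Icc a b) ∧ EqOn v'' u'' (Icc a b) ∧
      (∀ x, HasDerivAt v (v' x) x) ∧ (∀ x, HasDerivAt v' (v'' x) x) ∧ Continuous v'' := by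
  obtain ⟨v'', hv''_cont, hv'', -⟩ := exists_continuous_bounded_extension hab hu''
  obtain ⟨v', hv', hv'_deriv⟩ := exists_hasDerivAt_extension hu' hv''_cont hv''
  have hv'_cont : Continuous v' := continuous_iff_continuousAt.2 fun x => (hv'_deriv x).continuousAt
  obtain ⟨v, hv, hv_deriv⟩ := exists_hasDerivAt_extension hu hv'_cont hv'
  exact ⟨v, v', v'', hv, hv', hv'', hv_deriv, hv'_deriv, hv''_cont⟩

end Extension

section Reflection

variable {E : Type*} [NormedAddCommGroup E] [NormedSpace ℝ E]

lemma hasDerivAt_reflection {F : ℝ → E} {F' : E} {x : ℝ} {π : ℝ → ℝ} {C : NNReal}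
    (hF : HasDerivAt F F' x) (hπ : LipschitzWith C π) (hx : π x = x) :
    HasDerivAt (fun s => (2 : ℝ) • F (π s) - F (2 * π s - s)) F' x := by
  have hπ_tendsto : Tendsto π (𝓝 x) (𝓝 x) := by simpa only [hx] using hπ.continuous.tendsto x
  have hρ_tendsto : Tendsto (fun s => 2 * π s - s) (𝓝 x) (𝓝 x) := by
    simpa only [two_mul, add_sub_cancel_right, id] using
      (hπ_tendsto.const_mul 2).sub (tendsto_id (x := 𝓝 x))
  have hπ_bigO : (fun s => π s - x) =O[𝓝 x] fun s => s - x :=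
    .of_bound C (.of_forall fun s => by simpa only [hx] using hπ.norm_sub_le s x)
  have hρ_bigO : (fun s => 2 * π s - s - x) =O[𝓝 x] fun s => s - x :=
    ((hπ_bigO.const_mul_left 2).sub (Asymptotics.isBigO_refl _ _)).congr_left fun s => by ring
  rw [hasDerivAt_iff_isLittleO] at hF ⊢
  have hF_π := (hF.comp_tendsto hπ_tendsto).trans_isBigO hπ_bigO
  have hF_ρ := (hF.comp_tendsto hρ_tendsto).trans_isBigO hρ_bigO
  refine ((hF_π.const_smul_left (2 : ℝ)).sub hF_ρ).congr_left fun s => ?_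
  have hρx : 2 * x - x = x := by ring
  simp only [Pi.smul_apply, Function.comp_apply, hx, hρx]
  module

lemma integral_indicator_Icc_abs {r s : ℝ} (f : ℝ → E) (hr : r ∈ uIcc 0 s) :
    ∫ t in (-s)..s, (Icc (-|r|) |r|).indicator f t = ∫ t in (-r)..r, f t := by
  have hnonneg {r s : ℝ} (hr : 0 ≤ r) (hrs : r ≤ s) :
      ∫ t in (-s)..s, (Icc (-r) r).indicator f t = ∫ t in (-r)..r, f t := by
    rw [intervalIntegral.integral_of_le (by linarith), intervalIntegral.integral_of_le
      (by linarith), ← integral_Icc_eq_integral_Ioc, ← integral_Icc_eq_integral_Ioc,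
      setIntegral_indicator measurableSet_Icc,
      inter_eq_right.2 (Icc_subset_Icc (neg_le_neg hrs) hrs)]
  rcases le_total 0 s with hs | hs
  · rw [uIcc_of_le hs] at hr
    rw [abs_of_nonneg hr.1, hnonneg hr.1 hr.2]
  · rw [uIcc_of_ge hs] at hr
    rw [abs_of_nonpos hr.2, intervalIntegral.integral_symm, intervalIntegral.integral_symm r]
    simpa only [neg_neg] using
      congrArg Neg.neg (hnonneg (neg_nonneg.2 hr.2) (neg_le_neg hr.1))

/-- The point of `[-b, b]` nearest to `s`, for `0 ≤ b`; the reflection of a point `s` just outside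
`[-b, b]` in the nearby endpoint is `2 * clamp b s - s`. -/
def clamp (b s : ℝ) : ℝ := max (-b) (min s b)

lemma lipschitzWith_clamp (b : ℝ) : LipschitzWith 1 (clamp b) :=
  (LipschitzWith.id.min_const b).const_max (-b)

lemma clamp_of_mem {b s : ℝ} (hs : s ∈ Icc (-b) b) : clamp b s = s := by
  rw [clamp, min_eq_left hs.2, max_eq_right hs.1]

lemma clamp_mem_Icc {b s : ℝ} (hb : 0 ≤ b) : clamp b s ∈ Icc (-b) b :=
  ⟨le_max_left _ _, max_le (by linarith) (min_le_right _ _)⟩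

lemma clamp_mem_uIcc {b s : ℝ} (hb : 0 ≤ b) : clamp b s ∈ uIcc 0 s := by
  grind [clamp, Set.mem_uIcc]

lemma two_mul_clamp_sub_mem {b s : ℝ} (hs : s ∈ Icc (-(2 * b)) (2 * b)) :
    2 * clamp b s - s ∈ Icc (-b) b ∩ uIcc 0 s := by
  grind [clamp, Set.mem_uIcc]

end Reflection

section Kernel

variable {A E : Type*} [NormedRing A]

/-- The kernel `K(x, t) = G((x + t) / 2, (x - t) / 2)`, set to zero outside the double cone
`|t| ≤ |x|`. -/
def coneKernel (G : ℝ × ℝ → A) (x t : ℝ) : A :=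
  (Icc (-|x|) |x|).indicator (fun t => G ((x + t) / 2, (x - t) / 2)) t

/-- The cone kernel of `G` for `|x| ≤ b`, continued in `x` by odd reflection in the endpoints `±b`.
A derivative at `±b` takes into account points `x` outside `[-b, b]`, where a function given on
`[-b, b]` may only be evaluated at `|t| ≤ b`; the reflected kernel vanishes for all other `t` and
keeps integrals against such functions differentiable. -/
def reflectedKernel [NormedAlgebra ℝ A] (b : ℝ) (G : ℝ × ℝ → A) (x t : ℝ) : A :=
  (2 : ℝ) • coneKernel G (clamp b x) t - coneKernel G (2 * clamp b x - x) t

lemma reflectedKernel_of_mem [NormedAlgebra ℝ A] {b x t : ℝ} (G : ℝ × ℝ → A) (hx : |x| ≤ b)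
    (ht : |t| ≤ |x|) :
    reflectedKernel b G x t = G ((x + t) / 2, (x - t) / 2) := by
  have ht' : t ∈ Icc (-|x|) |x| := abs_le.1 ht
  simp only [reflectedKernel, clamp_of_mem (abs_le.1 hx), two_mul, add_sub_cancel_right, coneKernel,
    indicator_of_mem ht']
  rw [two_smul, add_sub_cancel_right]

lemma continuousOn_reflectedKernel [NormedAlgebra ℝ A] {G : ℝ × ℝ → A} (hG : Continuous G)
    (b : ℝ) :
    ContinuousOn (fun p : ℝ × ℝ => reflectedKernel b G p.1 p.2)
      {p : ℝ × ℝ | |p.2| ≤ |p.1| ∧ |p.1| ≤ b} :=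
  ContinuousOn.congr (f := fun p => G ((p.1 + p.2) / 2, (p.1 - p.2) / 2))
    (by fun_prop) fun _ hp => reflectedKernel_of_mem G hp.2 hp.1

variable [NormedAddCommGroup E] [Module A E] {G : ℝ × ℝ → A} {u v : ℝ → E} {b r s x : ℝ}

lemma coneKernel_smul (G : ℝ × ℝ → A) (u : ℝ → E) (x t : ℝ) :
    coneKernel G x t • u t =
      (Icc (-|x|) |x|).indicator (fun t => G ((x + t) / 2, (x - t) / 2) • u t) t :=
  (indicator_smul_apply_left ..).symm

lemma intervalIntegrable_coneKernel_smul [IsBoundedSMul A E] (hG : Continuous G)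
    (hu : ContinuousOn u (Icc (-b) b)) (hr : r ∈ Icc (-b) b) (c d : ℝ) :
    IntervalIntegrable (fun t => coneKernel G r t • u t) volume c d := by
  have hrb : |r| ≤ b := abs_le.2 hr
  have hu' : ContinuousOn u (Icc (-|r|) |r|) := hu.mono (Icc_subset_Icc (neg_le_neg hrb) hrb)
  have hcont : ContinuousOn (fun t => G ((r + t) / 2, (r - t) / 2) • u t) (Icc (-|r|) |r|) := by
    fun_prop
  simp only [coneKernel_smul]
  exact (hcont.integrableOn_Icc.integrable_indicator measurableSet_Icc).intervalIntegrable

variable [NormedSpace ℝ E]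

lemma integral_coneKernel_smul (G : ℝ × ℝ → A) (u : ℝ → E) (hr : r ∈ uIcc 0 s) :
    ∫ t in (-s)..s, coneKernel G r t • u t = charIntegral G u r := by
  simp only [coneKernel_smul, integral_indicator_Icc_abs _ hr, charIntegral]

variable [IsBoundedSMul A E] [NormedAlgebra ℝ A] [IsScalarTower ℝ A E]

lemma integral_reflectedKernel_smul (hb : 0 ≤ b) (hG : Continuous G)
    (hu : ContinuousOn u (Icc (-b) b)) (hx : x ∈ Icc (-(2 * b)) (2 * b)) :
    ∫ t in (-x)..x, reflectedKernel b G x t • u t =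
      (2 : ℝ) • charIntegral G u (clamp b x) - charIntegral G u (2 * clamp b x - x) := by
  have hρ := two_mul_clamp_sub_mem hx
  simp only [reflectedKernel, sub_smul, smul_assoc]
  rw [intervalIntegral.integral_sub
    (f := fun t => (2 : ℝ) • coneKernel G (clamp b x) t • u t)
    ((intervalIntegrable_coneKernel_smul hG hu (clamp_mem_Icc hb) _ _).smul (2 : ℝ))
    (intervalIntegrable_coneKernel_smul hG hu hρ.1 _ _),
    intervalIntegral.integral_smul, integral_coneKernel_smul G u (clamp_mem_uIcc hb),
    integral_coneKernel_smul G u hρ.2]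

lemma integral_reflectedKernel_smul_of_mem (hG : Continuous G)
    (hu : ContinuousOn u (Icc (-b) b)) (hx : x ∈ Icc (-b) b) :
    ∫ t in (-x)..x, reflectedKernel b G x t • u t = charIntegral G u x := by
  have hb : 0 ≤ b := by linarith [hx.1, hx.2]
  rw [integral_reflectedKernel_smul hb hG hu ⟨by linarith [hx.1], by linarith [hx.2]⟩,
    clamp_of_mem hx, two_mul, add_sub_cancel_right, two_smul, add_sub_cancel_right]

lemma hasDerivAt_integral_reflectedKernel_smul {F' : E} (hb : 0 < b) (hG : Continuous G)
    (hv : Continuous v) (hvu : EqOn v u (Icc (-b) b)) (hx : x ∈ Icc (-b) b)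
    (hF : HasDerivAt (charIntegral G v) F' x) :
    HasDerivAt (fun s => ∫ t in (-s)..s, reflectedKernel b G s t • u t) F' x := by
  refine (hasDerivAt_reflection hF (lipschitzWith_clamp b) (clamp_of_mem hx)).congr_of_eventuallyEq
    ?_
  have hnhds : Icc (-(2 * b)) (2 * b) ∈ 𝓝 x :=
    Icc_mem_nhds (by linarith [hx.1]) (by linarith [hx.2])
  filter_upwards [hnhds] with s hs
  rw [integral_reflectedKernel_smul hb.le hG (hv.continuousOn.congr hvu.symm) hs,
    charIntegral_congr hvu (clamp_mem_Icc hb.le),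
    charIntegral_congr hvu (two_mul_clamp_sub_mem hs).1]

end Kernel

theorem transmutation_operator_exists_general {A E : Type*} [NormedRing A] [NormedAlgebra ℝ A]
    [CompleteSpace A] [NormedAddCommGroup E] [NormedSpace ℝ E] [CompleteSpace E] [Module A E]
    [IsBoundedSMul A E] [IsScalarTower ℝ A E]
    (b : ℝ) (hb : 0 < b) (q : ℝ → A) (hq : ContinuousOn q (Icc (-b) b)) :
    ∃ K : ℝ → ℝ → A,
      ContinuousOn (fun p : ℝ × ℝ => K p.1 p.2) {p : ℝ × ℝ | |p.2| ≤ |p.1| ∧ |p.1| ≤ b} ∧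
      ∀ u u' u'' : ℝ → E,
        (∀ x ∈ Icc (-b) b, HasDerivAt u (u' x) x) →
        (∀ x ∈ Icc (-b) b, HasDerivAt u' (u'' x) x) →
        ContinuousOn u'' (Icc (-b) b) →
        ∃ D1 D2 : ℝ → E,
          (∀ x ∈ Icc (-b) b,
            HasDerivAt (fun s : ℝ => u s + ∫ t in (-s)..s, K s t • u t) (D1 x) x) ∧
          (∀ x ∈ Icc (-b) b, HasDerivAt D1 (D2 x) x) ∧
          ContinuousOn D2 (Icc (-b) b) ∧
          ∀ x ∈ Icc (-b) b,
            D2 x - q x • (u x + ∫ t in (-x)..x, K x t • u t)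
              = u'' x + ∫ t in (-x)..x, K x t • u'' t := by
  have hbb : -b ≤ b := by linarith
  obtain ⟨Q, hQ, hQq, M, hM⟩ := exists_continuous_bounded_extension hbb hq
  obtain ⟨H, Hη, hH⟩ := exists_isGoursatSolution hQ hM
  have hHc := hH.continuous
  refine ⟨reflectedKernel b H, continuousOn_reflectedKernel hHc b,
    fun u u' u'' hu hu' hu'' => ?_⟩
  obtain ⟨v, v', v'', hvu, hvu', hvu'', hv_deriv, hv'_deriv, hv''⟩ :=
    exists_hasDerivAt_hasDerivAt_extension hbb (fun x hx => (hu x hx).hasDerivWithinAt)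
      (fun x hx => (hu' x hx).hasDerivWithinAt) hu''
  have hv' : Continuous v' := continuous_iff_continuousAt.2 fun x => (hv'_deriv x).continuousAt
  have hv : Continuous v := continuous_iff_continuousAt.2 fun x => (hv_deriv x).continuousAt
  refine ⟨fun x => v' x + ((2 : ℝ) • H (x, 0) • v x + charIntegral Hη v x - charIntegral H v' x),
    fun x => v'' x + (Q x • v x + Q x • charIntegral H v x + charIntegral H v'' x),
    fun x hx => ?_, fun x _ => ?_, ?_, fun x hx => ?_⟩
  · dsimp only
    rw [hvu' hx]
    exact (hu x hx).add (hasDerivAt_integral_reflectedKernel_smul hb hHc hv hvu hx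
      (hH.hasDerivAt_charIntegral hv' hv_deriv x))
  · exact (hv'_deriv x).add (hH.hasDerivAt_deriv_charIntegral hQ hv'' hv_deriv hv'_deriv x)
  · have hcharH := continuous_charIntegral hHc hv
    have hcharH'' := continuous_charIntegral hHc hv''
    fun_prop
  · dsimp only
    rw [integral_reflectedKernel_smul_of_mem hHc (hv.continuousOn.congr hvu.symm) hx,
      integral_reflectedKernel_smul_of_mem hHc hu'' hx, ← charIntegral_congr hvu hx,
      ← charIntegral_congr hvu'' hx, hQq hx, hvu hx, hvu'' hx, smul_add]
    abel

/-- existence of a transmutation operator with continuous kernel. -/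
theorem transmutation_operator_exists
    (b : ℝ) (hb : 0 < b) (q : ℝ → ℂ) (hq : ContinuousOn q (Set.Icc (-b) b)) :
    ∃ K : ℝ → ℝ → ℂ,
      ContinuousOn (fun p : ℝ × ℝ => K p.1 p.2) {p : ℝ × ℝ | |p.2| ≤ |p.1| ∧ |p.1| ≤ b} ∧
      ∀ u u' u'' : ℝ → ℂ,
        (∀ x ∈ Set.Icc (-b) b, HasDerivAt u (u' x) x) →
        (∀ x ∈ Set.Icc (-b) b, HasDerivAt u' (u'' x) x) →
        ContinuousOn u'' (Set.Icc (-b) b) →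
        ∃ D1 D2 : ℝ → ℂ,
          (∀ x ∈ Set.Icc (-b) b,
            HasDerivAt (fun s : ℝ => u s + ∫ t in (-s)..s, K s t * u t) (D1 x) x) ∧
          (∀ x ∈ Set.Icc (-b) b, HasDerivAt D1 (D2 x) x) ∧
          ContinuousOn D2 (Set.Icc (-b) b) ∧
          ∀ x ∈ Set.Icc (-b) b,
            D2 x - q x * (u x + ∫ t in (-x)..x, K x t * u t)
              = u'' x + ∫ t in (-x)..x, K x t * u'' t :=
  transmutation_operator_exists_general b hb q hq

end
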